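/- Let (C,Δ,ε) be a comonoid in M and let X be an object of M. The following are equivalent: (i) there exists a morphism ρ : C⊗X → (C⊗X)⊗C making C⊗X a C-bicomodule whose left C-coaction is Δ⊗X, i.e. ρ satisfies (id_{C⊗X}⊗ε)∘ρ = id_{C⊗X}, (ρ⊗C)∘ρ = ((C⊗X)⊗Δ)∘ρ, and ((Δ⊗X)⊗C)∘ρ = (C⊗ρ)∘(Δ⊗X); (ii) there exists a morphism 𝔵 : C⊗X → X⊗C satisfying (X⊗Δ)∘𝔵 = (𝔵⊗C)∘(C⊗𝔵)∘(Δ⊗X) and (X⊗ε)∘𝔵 = ε⊗X. (The passage (ii)⇒(i) is given by ρ = (C⊗𝔵)∘(Δ⊗X), and (i)⇒(ii) by 𝔵 = (ε⊗X⊗C)∘ρ.) -/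

import Mathlib

open CategoryTheory MonoidalCategory

/-- Lemma 1.2 of "Compatibility condition between ring and coring":
for a comonoid `(C, Δ, ε)` in a monoidal category and an object `X`, the existence of a
`C`-bicomodule structure on `C ⊗ X` whose left coaction is `Δ ▷ X` is equivalent to the
existence of an entwining `C ⊗ X ⟶ X ⊗ C`. -/
theorem stmt_0 {M : Type*} [Category M] [MonoidalCategory M]
    (C X : M) (Δ : C ⟶ C ⊗ C) (ε : C ⟶ 𝟙_ M)
    (hcounit_l : Δ ≫ (ε ▷ C) = (λ_ C).inv)
    (hcounit_r : Δ ≫ (C ◁ ε) = (ρ_ C).inv)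
    (hcoassoc : Δ ≫ (Δ ▷ C) ≫ (α_ C C C).hom = Δ ≫ (C ◁ Δ)) :
    (∃ ρ : C ⊗ X ⟶ (C ⊗ X) ⊗ C,
        ρ ≫ ((C ⊗ X) ◁ ε) = (ρ_ (C ⊗ X)).inv ∧
        ρ ≫ (ρ ▷ C) ≫ (α_ (C ⊗ X) C C).hom = ρ ≫ ((C ⊗ X) ◁ Δ) ∧
        ρ ≫ ((Δ ▷ X) ▷ C) =
          (Δ ▷ X) ≫ (α_ C C X).hom ≫ (C ◁ ρ) ≫ (α_ C (C ⊗ X) C).inv ≫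
            ((α_ C C X).inv ▷ C)) ↔
    (∃ x : C ⊗ X ⟶ X ⊗ C,
        x ≫ (X ◁ Δ) =
          (Δ ▷ X) ≫ (α_ C C X).hom ≫ (C ◁ x) ≫ (α_ C X C).inv ≫
            (x ▷ C) ≫ (α_ X C C).hom ∧
        x ≫ (X ◁ ε) ≫ (ρ_ X).hom = (ε ▷ X) ≫ (λ_ X).hom) := by
  constructor
  · rintro ⟨r, h1, h2, h3⟩
    obtain ⟨x, hx⟩ : ∃ x : C ⊗ X ⟶ X ⊗ C, x = r ≫ ((ε ▷ X) ▷ C) ≫ ((λ_ X).hom ▷ C) := ⟨_, rfl⟩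
    have key : r = (Δ ▷ X) ≫ (α_ C C X).hom ≫ (C ◁ x) ≫ (α_ C X C).inv := by
      calc r = r ≫ (((ρ_ C).inv ▷ X) ▷ C) ≫ (((ρ_ C).hom ▷ X) ▷ C) := by monoidal
        _ = (r ≫ ((Δ ▷ X) ▷ C)) ≫ (((C ◁ ε) ▷ X) ▷ C) ≫ (((ρ_ C).hom ▷ X) ▷ C) := by
            rw [← hcounit_r]; monoidal
        _ = (Δ ▷ X) ≫ (α_ C C X).hom ≫ (C ◁ (r ≫ ((ε ▷ X) ▷ C) ≫ ((λ_ X).hom ▷ C))) ≫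
              (α_ C X C).inv := by
            rw [h3]; monoidal
        _ = _ := by rw [← hx]
    refine ⟨x, ?_, ?_⟩
    · calc x ≫ (X ◁ Δ) = r ≫ (((ε ▷ X) ≫ (λ_ X).hom) ▷ C ≫ (X ◁ Δ)) := by rw [hx]; monoidal
        _ = (r ≫ ((C ⊗ X) ◁ Δ)) ≫ (((ε ▷ X) ≫ (λ_ X).hom) ▷ (C ⊗ C)) := by
            rw [← whisker_exchange]; monoidal
        _ = r ≫ ((r ≫ ((ε ▷ X) ▷ C) ≫ ((λ_ X).hom ▷ C)) ▷ C) ≫ (α_ X C C).hom := by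
            rw [← h2]; monoidal
        _ = r ≫ (x ▷ C) ≫ (α_ X C C).hom := by rw [← hx]
        _ = _ := by rw [key]; monoidal
    · calc x ≫ (X ◁ ε) ≫ (ρ_ X).hom
          = r ≫ (((ε ▷ X) ≫ (λ_ X).hom) ▷ C ≫ (X ◁ ε)) ≫ (ρ_ X).hom := by rw [hx]; monoidal
        _ = (r ≫ ((C ⊗ X) ◁ ε)) ≫ (((ε ▷ X) ≫ (λ_ X).hom) ▷ (𝟙_ M)) ≫ (ρ_ X).hom := by
            rw [← whisker_exchange]; monoidal
        _ = _ := by rw [h1]; monoidal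
  · rintro ⟨x, h1, h2⟩
    have ex : (Δ ▷ (C ⊗ X)) ≫ ((C ⊗ C) ◁ x) = (C ◁ x) ≫ (Δ ▷ (X ⊗ C)) :=
      (whisker_exchange _ _).symm
    refine ⟨(Δ ▷ X) ≫ (α_ C C X).hom ≫ (C ◁ x) ≫ (α_ C X C).inv, ?_, ?_, ?_⟩
    · calc _ = (Δ ▷ X) ≫ (α_ C C X).hom ≫ (C ◁ (x ≫ (X ◁ ε) ≫ (ρ_ X).hom)) ≫
              (ρ_ (C ⊗ X)).inv := by monoidal
        _ = ((Δ ≫ (C ◁ ε)) ▷ X) ≫ (α_ C (𝟙_ M) X).hom ≫ (C ◁ (λ_ X).hom) ≫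
              (ρ_ (C ⊗ X)).inv := by rw [h2]; monoidal
        _ = _ := by rw [hcounit_r]; monoidal
    · symm
      calc _ = (Δ ▷ X) ≫ (α_ C C X).hom ≫ (C ◁ (x ≫ (X ◁ Δ))) ≫ (α_ C X (C ⊗ C)).inv := by
              monoidal
        _ = ((Δ ≫ (C ◁ Δ)) ▷ X) ≫ (α_ C (C ⊗ C) X).hom ≫ (C ◁ ((α_ C C X).hom ≫ (C ◁ x) ≫
              (α_ C X C).inv ≫ (x ▷ C) ≫ (α_ X C C).hom)) ≫ (α_ C X (C ⊗ C)).inv := by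
            rw [h1]; monoidal
        _ = (Δ ▷ X) ≫ (α_ C C X).hom ≫ ((Δ ▷ (C ⊗ X)) ≫ ((C ⊗ C) ◁ x)) ≫ (α_ C C (X ⊗ C)).hom ≫
              (C ◁ ((α_ C X C).inv ≫ (x ▷ C) ≫ (α_ X C C).hom)) ≫ (α_ C X (C ⊗ C)).inv := by
            rw [← hcoassoc]; monoidal
        _ = _ := by rw [ex]; monoidal
    · calc _ = (Δ ▷ X) ≫ (α_ C C X).hom ≫ ((C ◁ x) ≫ (Δ ▷ (X ⊗ C))) ≫
              (α_ (C ⊗ C) X C).inv := by monoidal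
        _ = ((Δ ≫ (Δ ▷ C) ≫ (α_ C C C).hom) ▷ X) ≫ (α_ C (C ⊗ C) X).hom ≫
              (C ◁ (α_ C C X).hom) ≫ (C ◁ (C ◁ x)) ≫ (α_ C C (X ⊗ C)).inv ≫
              (α_ (C ⊗ C) X C).inv := by rw [← ex]; monoidal
        _ = _ := by rw [hcoassoc]; monoidal
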